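/- Let R be a commutative ring, n ≥ 3, and N ≥ 1. Suppose that every element of E(3,R) can be written as a product v₁·v₂·⋯·v_N of N matrices lying alternately in U⁺(3,R) and U⁻(3,R) (starting with U⁺(3,R)). Then every element of E(n,R) can be written as a product u₁·u₂·⋯·u_N of N matrices lying alternately in U⁺(n,R) and U⁻(n,R) (starting with U⁺(n,R)). -/

import Mathlib

/-!
STATEMENT 4. Let `R` be a commutative ring, `n ≥ 3`, and `N ≥ 1`. Suppose that every
element of `E(3,R)` can be written as a product of `N` matrices lying alternately in
`U⁺(3,R)` and `U⁻(3,R)` (starting with `U⁺(3,R)`). Then every element of `E(n,R)` can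
be written as a product of `N` matrices lying alternately in `U⁺(n,R)` and `U⁻(n,R)`
(starting with `U⁺(n,R)`).
-/

/-- The set of elementary transvections `e_{ij}(r) = 1 + r·E_{ij}`, `i ≠ j`, in `SL(n,R)`. -/
def ElemTransvections (n : ℕ) (R : Type) [CommRing R] :
    Set (Matrix.SpecialLinearGroup (Fin n) R) :=
  {g | ∃ (i j : Fin n) (r : R), i ≠ j ∧
    (g : Matrix (Fin n) (Fin n) R) = Matrix.transvection i j r}

/-- The elementary subgroup `E(n,R) ≤ SL(n,R)` generated by all elementary transvections. -/
def ElementarySubgroup (n : ℕ) (R : Type) [CommRing R] :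
    Subgroup (Matrix.SpecialLinearGroup (Fin n) R) :=
  Subgroup.closure (ElemTransvections n R)

/-- The set `U⁺(n,R)` of upper triangular matrices in `SL(n,R)` with all diagonal
entries equal to `1`. -/
def UnitriangularUpper (n : ℕ) (R : Type) [CommRing R] :
    Set (Matrix.SpecialLinearGroup (Fin n) R) :=
  {g | (∀ i : Fin n, (g : Matrix (Fin n) (Fin n) R) i i = 1) ∧
       ∀ i j : Fin n, j < i → (g : Matrix (Fin n) (Fin n) R) i j = 0}

/-- The set `U⁻(n,R)` of lower triangular matrices in `SL(n,R)` with all diagonal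
entries equal to `1`. -/
def UnitriangularLower (n : ℕ) (R : Type) [CommRing R] :
    Set (Matrix.SpecialLinearGroup (Fin n) R) :=
  {g | (∀ i : Fin n, (g : Matrix (Fin n) (Fin n) R) i i = 1) ∧
       ∀ i j : Fin n, i < j → (g : Matrix (Fin n) (Fin n) R) i j = 0}

/-- `g = u₁ ⋯ u_N` where the `uₖ` lie alternately in `U⁺(n,R)` and `U⁻(n,R)`,
starting with `U⁺(n,R)`. -/
def IsAlternatingUnitriangularProd (n : ℕ) (R : Type) [CommRing R] (N : ℕ)
    (g : Matrix.SpecialLinearGroup (Fin n) R) : Prop :=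
  ∃ u : Fin N → Matrix.SpecialLinearGroup (Fin n) R,
    (∀ i : Fin N, (i.val % 2 = 0 → u i ∈ UnitriangularUpper n R) ∧
                  (i.val % 2 = 1 → u i ∈ UnitriangularLower n R)) ∧
    g = (List.ofFn u).prod

/-!
This is Tavgen's rank reduction. Let `φ` embed `SL(m, R)` into `SL(n, R)` as a block of `m`
consecutive rows and columns. Each unitriangular group splits as `U± = φ(U±_m) V±`, where the
unipotent radical `V±` is normalized by the image of `φ`. All factors from that image can therefore
be moved to the left, and the set `Y` of products `U⁺ U⁻ U⁺ ⋯` equals `φ(E(m, R)) V⁺ V⁻ V⁺ ⋯`,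
because `E(m, R) = U⁺_m U⁻_m U⁺_m ⋯`. Hence `Y` is stable under left multiplication by
`φ(E(m, R))` for every position of the block. Already for `m = 2` these subgroups contain the
transvections with adjacent indices, which generate `E(n, R)` by iterated commutators. So `Y` is
stable under `E(n, R)`, and it contains `1`.
-/

section AlternatingProducts

open scoped Pointwise

variable {G H : Type*} [Group G] [Group H]

theorem commute_of_conj_mem {S V : Set G} (K : Subgroup G) (hS : S ⊆ K)
    (hV : ∀ k ∈ K, ∀ v ∈ V, k * v * k⁻¹ ∈ V) : Commute S V := by
  apply Set.Subset.antisymm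
  · rintro _ ⟨s, hs, v, hv, rfl⟩
    exact ⟨s * v * s⁻¹, hV s (hS hs) v hv, s, hs, by simp⟩
  · rintro _ ⟨v, hv, s, hs, rfl⟩
    exact ⟨s, hs, s⁻¹ * v * s⁻¹⁻¹, hV s⁻¹ (inv_mem (hS hs)) v hv, by simp [mul_assoc]⟩

theorem list_prod_map_mul_of_commute {M ι : Type*} [Monoid M] (a v : ι → M)
    (h : ∀ i j, Commute (a i) (v j)) (l : List ι) :
    (l.map fun i => a i * v i).prod = (l.map a).prod * (l.map v).prod := by
  induction l with
  | nil => simp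
  | cons i l ih =>
    have hcomm : Commute (l.map a).prod (v i) :=
      Commute.list_prod_left _ _ (by simpa using fun j _ => h j i)
    simp only [List.map_cons, List.prod_cons, ih]
    rw [mul_assoc, ← mul_assoc (v i), ← hcomm.eq]
    simp only [mul_assoc]

theorem smul_list_prod_eq_of_levi {ι : Type*} (φ : H →* G) (E : Subgroup H) {A : ι → Set H}
    {U V : ι → Set G} (hU : ∀ i, U i = φ '' A i * V i)
    (hV : ∀ i h, ∀ v ∈ V i, φ h * v * (φ h)⁻¹ ∈ V i) {l : List ι} (hE : (l.map A).prod = E)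
    {h : H} (hh : h ∈ E) : φ h • (l.map U).prod = (l.map U).prod := by
  have hcomm (i j : ι) : Commute (φ '' A i) (V j) :=
    commute_of_conj_mem φ.range (by simp [Set.subset_def]) <| by
      rintro _ ⟨h, rfl⟩
      exact hV j h
  have hprod : (l.map U).prod = φ '' E * (l.map V).prod := by
    rw [funext hU, list_prod_map_mul_of_commute _ _ hcomm, ← hE, Set.image_list_prod,
      List.map_map]
    rfl
  rw [hprod, ← smul_mul_assoc, ← Set.image_smul_distrib, smul_coe_set hh]

end AlternatingProducts

section Supports

variable {ι κ R : Type*} [CommRing R]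

/-- A matrix is supported on a relation `r` if its entries at the positions `(i, j)` outside `r`
vanish. -/
def SupportedOn (M : Matrix ι κ R) (r : ι → κ → Prop) : Prop :=
  ∀ i j, ¬ r i j → M i j = 0

theorem SupportedOn.mono {M : Matrix ι κ R} {r s : ι → κ → Prop} (hM : SupportedOn M r)
    (hrs : ∀ i j, r i j → s i j) : SupportedOn M s :=
  fun i j h => hM i j (mt (hrs i j) h)

theorem SupportedOn.add {M N : Matrix ι κ R} {r : ι → κ → Prop} (hM : SupportedOn M r)
    (hN : SupportedOn N r) : SupportedOn (M + N) r := fun i j h => by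
  rw [Matrix.add_apply, hM i j h, hN i j h, add_zero]

theorem SupportedOn.mul {μ : Type*} [Fintype κ] {M : Matrix ι κ R} {N : Matrix κ μ R}
    {r : ι → κ → Prop} {s : κ → μ → Prop} (hM : SupportedOn M r) (hN : SupportedOn N s) :
    SupportedOn (M * N) (Relation.Comp r s) := by
  intro i j hij
  rw [Matrix.mul_apply]
  refine Finset.sum_eq_zero fun k _ => ?_
  by_cases hik : r i k
  · rw [hN k j fun hkj => hij ⟨k, hik, hkj⟩, mul_zero]
  · rw [hM i k hik, zero_mul]

variable [DecidableEq ι]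

theorem supportedOn_one : SupportedOn (1 : Matrix ι ι R) (· = ·) :=
  fun _ _ => Matrix.one_apply_ne

theorem det_one_add_of_supportedOn [Fintype ι] {r : ι → ι → Prop} [IsStrictTotalOrder ι r]
    {M : Matrix ι ι R} (hM : SupportedOn M r) : (1 + M).det = 1 := by
  classical
  let := linearOrderOfSTO r
  have hdiag (i : ι) : (1 + M) i i = 1 := by simp [hM i i (irrefl i)]
  have htri : (1 + M).IsUpperTriangular := fun i j (hij : j < i) => by
    rw [Matrix.add_apply, Matrix.one_apply_ne hij.ne', hM i j (asymm_of r hij), add_zero]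
  rw [Matrix.det_of_isUpperTriangular htri, Finset.prod_eq_one fun i _ => hdiag i]

end Supports

section PatternSet

open Matrix

variable {ι R : Type*} [Fintype ι] [DecidableEq ι] [CommRing R]

/-- The set of those `g ∈ SL(ι, R)` for which `g - 1` is supported on `r`; unitriangular groups and
the unipotent radicals of parabolic subgroups are of this form. -/
def patternSet (r : ι → ι → Prop) : Set (Matrix.SpecialLinearGroup ι R) :=
  {g | SupportedOn ((g : Matrix ι ι R) - 1) r}

theorem one_mem_patternSet (r : ι → ι → Prop) :
    (1 : Matrix.SpecialLinearGroup ι R) ∈ patternSet r :=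
  fun i j _ => by simp

theorem mem_patternSet_iff {r : ι → ι → Prop} [IsStrictTotalOrder ι r]
    {g : Matrix.SpecialLinearGroup ι R} :
    g ∈ patternSet r ↔ (∀ i, (g : Matrix ι ι R) i i = 1) ∧
      ∀ i j, r j i → (g : Matrix ι ι R) i j = 0 := by
  refine ⟨fun hg => ⟨fun i => ?_, fun i j hji => ?_⟩, fun ⟨hdiag, htri⟩ i j hij => ?_⟩
  · simpa [sub_eq_zero] using hg i i (irrefl i)
  · have hne : i ≠ j := (ne_of_irrefl hji).symm
    simpa [hne] using hg i j (asymm_of r hji)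
  · rcases trichotomous_of r i j with h | rfl | h
    · exact absurd h hij
    · simp [hdiag]
    · have hne : i ≠ j := (ne_of_irrefl h).symm
      simp [hne, htri i j h]

theorem coe_conj_sub_one (g v : Matrix.SpecialLinearGroup ι R) :
    ((g * v * g⁻¹ : Matrix.SpecialLinearGroup ι R) : Matrix ι ι R) - 1 =
      g * ((v : Matrix ι ι R) - 1) * (g⁻¹ : Matrix.SpecialLinearGroup ι R) := by
  have hinv : (g : Matrix ι ι R) * (g⁻¹ : Matrix.SpecialLinearGroup ι R) = 1 := by
    rw [← Matrix.SpecialLinearGroup.coe_mul, mul_inv_cancel, Matrix.SpecialLinearGroup.coe_one]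
  rw [mul_sub, mul_one, sub_mul, hinv, Matrix.SpecialLinearGroup.coe_mul,
    Matrix.SpecialLinearGroup.coe_mul]

theorem exists_mem_mul_apply_eq_add_ite {T : Subgroup (Matrix.SpecialLinearGroup ι R)}
    (hT : ∀ (i j : ι) (hij : i ≠ j) (c : R), Matrix.SpecialLinearGroup.transvection hij c ∈ T)
    {a : ι} (v : ι → R) {s : Finset ι} (ha : a ∉ s) :
    ∃ e ∈ T, ∀ (M : Matrix ι ι R) (i j : ι),
      ((e : Matrix ι ι R) * M) i j = M i j + if i ∈ s then v i * M a j else 0 := by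
  induction s using Finset.induction_on with
  | empty => exact ⟨1, one_mem T, by simp⟩
  | insert b s hb ih =>
    obtain ⟨hab, has⟩ : a ≠ b ∧ a ∉ s := by simpa using ha
    obtain ⟨e, he, hes⟩ := ih has
    refine ⟨Matrix.SpecialLinearGroup.transvection hab.symm (v b) * e, mul_mem (hT ..) he,
      fun M i j => ?_⟩
    rw [Matrix.SpecialLinearGroup.coe_mul, Matrix.mul_assoc]
    by_cases hib : i = b
    · subst hib
      refine (transvection_mul_apply_same ..).trans ?_
      simp [hes, hb, has]
    · refine (transvection_mul_apply_of_ne _ _ _ _ hib _ _).trans ?_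
      simp [hes, hib]

/-- Clearing column `a` changes only entries `(i, j)` with `r i a`, and those by multiples of the
`(a, j)` entry; transitivity of `r` then keeps the pattern. -/
theorem exists_mul_mem_patternSet_of_insert {T : Subgroup (Matrix.SpecialLinearGroup ι R)}
    (hT : ∀ (i j : ι) (hij : i ≠ j) (c : R), Matrix.SpecialLinearGroup.transvection hij c ∈ T)
    {r : ι → ι → Prop} [IsStrictOrder ι r] {a : ι} {s : Set ι}
    {g : Matrix.SpecialLinearGroup ι R}
    (hg : g ∈ patternSet fun i j => r i j ∧ j ∈ insert a s) :
    ∃ e ∈ T, e * g ∈ patternSet fun i j => r i j ∧ j ∈ s := by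
  set M := (g : Matrix ι ι R) - 1
  have haa : M a a = 0 := hg a a fun h => irrefl a h.1
  obtain ⟨e, he, hentry⟩ := exists_mem_mul_apply_eq_add_ite hT (fun i => -M i a)
    (Finset.notMem_erase a Finset.univ)
  refine ⟨e, he, fun i j hij => ?_⟩
  have hgM : (g : Matrix ι ι R) = 1 + M := (add_sub_cancel ..).symm
  rw [Matrix.SpecialLinearGroup.coe_mul, Matrix.sub_apply, hentry, hgM]
  by_cases hja : j = a
  · subst hja
    rcases eq_or_ne i j with rfl | hne
    · simp [haa]
    · simp [haa, hne]
  have hij' : M i j = 0 := hg i j fun h => hij ⟨h.1, h.2.resolve_left hja⟩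
  by_cases hia : r i a
  · have haj : M a j = 0 :=
      hg a j fun h => hij ⟨_root_.trans hia h.1, h.2.resolve_left hja⟩
    simp [hij', haj, Ne.symm hja]
  · have hia' : M i a = 0 := hg i a fun h => hia h.1
    simp [hij', hia']

theorem patternSet_subset_of_transvection_mem {T : Subgroup (Matrix.SpecialLinearGroup ι R)}
    (hT : ∀ (i j : ι) (hij : i ≠ j) (c : R), Matrix.SpecialLinearGroup.transvection hij c ∈ T)
    (r : ι → ι → Prop) [IsStrictOrder ι r] :
    (patternSet r : Set (Matrix.SpecialLinearGroup ι R)) ⊆ T := by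
  suffices h : ∀ (s : Finset ι) (g : Matrix.SpecialLinearGroup ι R),
      g ∈ patternSet (fun i j => r i j ∧ j ∈ (s : Set ι)) → g ∈ T from
    fun g hg => h Finset.univ g (by simpa using hg)
  intro s
  induction s using Finset.induction_on with
  | empty =>
    intro g hg
    have : g = 1 := Subtype.ext <| sub_eq_zero.1 <| by
      ext i j
      exact hg i j (by simp)
    exact this ▸ one_mem T
  | insert a s _ ih =>
    intro g hg
    obtain ⟨e, he, heg⟩ := exists_mul_mem_patternSet_of_insert hT
      (by simpa only [Finset.coe_insert] using hg)
    exact (T.mul_mem_cancel_left he).1 (ih _ heg)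

end PatternSet

section BlockEmbedding

open Matrix

theorem submatrix_one_mul_submatrix_one {α ι R : Type*} [DecidableEq α] [Fintype ι]
    [DecidableEq ι] [CommRing R] (w : α ↪ ι) :
    (1 : Matrix ι ι R).submatrix w id * (1 : Matrix ι ι R).submatrix id w = 1 := by
  rw [← submatrix_mul _ _ w id w Function.bijective_id, mul_one, submatrix_one_embedding]

variable {α ι R : Type*} [Fintype α] [DecidableEq ι] [CommRing R]

/-- The matrix `M` placed in the rows and columns `w x`, with zeros elsewhere. It is written as a
product of three matrices so that multiplicativity and determinants come from matrix algebra. -/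
def padZero (w : α ↪ ι) (M : Matrix α α R) : Matrix ι ι R :=
  (1 : Matrix ι ι R).submatrix id w * M * (1 : Matrix ι ι R).submatrix w id

theorem padZero_add (w : α ↪ ι) (M N : Matrix α α R) :
    padZero w (M + N) = padZero w M + padZero w N := by
  simp only [padZero, Matrix.mul_add, Matrix.add_mul]

theorem SupportedOn.padZero (w : α ↪ ι) {M : Matrix α α R} {r : α → α → Prop}
    (hM : SupportedOn M r) : SupportedOn (padZero w M) (Relation.Map r w w) := by
  have hrows : SupportedOn ((1 : Matrix ι ι R).submatrix id w) (fun i x => i = w x) :=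
    fun i x => one_apply_ne
  have hcols : SupportedOn ((1 : Matrix ι ι R).submatrix w id) (fun x i => w x = i) :=
    fun x i => one_apply_ne
  refine ((hrows.mul hM).mul hcols).mono ?_
  rintro i j ⟨y, ⟨x, rfl, hxy⟩, rfl⟩
  exact ⟨x, y, hxy, rfl, rfl⟩

theorem padZero_apply_apply (w : α ↪ ι) (M : Matrix α α R) (x y : α) :
    padZero w M (w x) (w y) = M x y := by
  classical
  have h : (padZero w M).submatrix w w = M := by
    rw [padZero, submatrix_mul _ _ w id w Function.bijective_id,
      submatrix_mul _ _ w id id Function.bijective_id]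
    simp only [submatrix_submatrix, Function.id_comp, Function.comp_id, submatrix_id_id,
      submatrix_one_embedding, Matrix.one_mul, Matrix.mul_one]
  exact congr_fun₂ h x y

theorem padZero_mul [Fintype ι] (w : α ↪ ι) (M N : Matrix α α R) :
    padZero w (M * N) = padZero w M * padZero w N := by
  classical
  calc padZero w (M * N)
      = (1 : Matrix ι ι R).submatrix id w * M * ((1 : Matrix ι ι R).submatrix w id *
          (1 : Matrix ι ι R).submatrix id w) * N * (1 : Matrix ι ι R).submatrix w id := by
        simp only [padZero, submatrix_one_mul_submatrix_one, Matrix.mul_one, Matrix.mul_assoc]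
    _ = padZero w M * padZero w N := by simp only [padZero, Matrix.mul_assoc]

variable [DecidableEq α]

theorem padZero_single (w : α ↪ ι) (x y : α) (c : R) :
    padZero w (single x y c) = single (w x) (w y) c := by
  ext i j
  by_cases hij : Relation.Map (fun a b => a = x ∧ b = y) w w i j
  · obtain ⟨_, _, ⟨rfl, rfl⟩, rfl, rfl⟩ := hij
    rw [padZero_apply_apply, single_apply_same, single_apply_same]
  · have hsingle : SupportedOn (single x y c) (fun a b => a = x ∧ b = y) :=
      fun a b hab => single_apply_of_ne _ _ _ _ _ fun h => hab ⟨h.1.symm, h.2.symm⟩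
    rw [hsingle.padZero w i j hij, single_apply_of_ne]
    rintro ⟨rfl, rfl⟩
    exact hij ⟨x, y, ⟨rfl, rfl⟩, rfl, rfl⟩

variable [Fintype ι]

theorem det_one_add_padZero (w : α ↪ ι) (M : Matrix α α R) :
    (1 + padZero w M).det = (1 + M).det := by
  rw [padZero, Matrix.mul_assoc, det_one_add_mul_comm, Matrix.mul_assoc,
    submatrix_one_mul_submatrix_one, Matrix.mul_one]

theorem one_add_padZero_mul_one_add_padZero (w : α ↪ ι) (M N : Matrix α α R) :
    (1 + padZero w (M - 1)) * (1 + padZero w (N - 1)) = 1 + padZero w (M * N - 1) := by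
  have hMN : M * N - 1 = (M - 1) + (N - 1) + (M - 1) * (N - 1) := by noncomm_ring
  rw [hMN, padZero_add, padZero_add, padZero_mul]
  noncomm_ring

/-- The block embedding `SL(α, R) → SL(ι, R)` along `w : α ↪ ι`: the matrix `g` is placed in the
rows and columns `w x` and completed by the identity matrix. -/
def blockEmb (w : α ↪ ι) : Matrix.SpecialLinearGroup α R →* Matrix.SpecialLinearGroup ι R where
  toFun g :=
    ⟨1 + padZero w ((g : Matrix α α R) - 1), by
      rw [det_one_add_padZero, add_sub_cancel, g.det_coe]⟩
  map_one' := Subtype.ext <| by simp [padZero]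
  map_mul' g h := Subtype.ext <| by
    change 1 + padZero w ((g : Matrix α α R) * (h : Matrix α α R) - 1) =
      (1 + padZero w ((g : Matrix α α R) - 1)) * (1 + padZero w ((h : Matrix α α R) - 1))
    rw [one_add_padZero_mul_one_add_padZero]

theorem coe_blockEmb (w : α ↪ ι) (g : Matrix.SpecialLinearGroup α R) :
    (blockEmb w g : Matrix ι ι R) = 1 + padZero w ((g : Matrix α α R) - 1) :=
  rfl

theorem blockEmb_transvection (w : α ↪ ι) {x y : α} (hxy : x ≠ y) (c : R) :
    blockEmb w (Matrix.SpecialLinearGroup.transvection hxy c) =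
      Matrix.SpecialLinearGroup.transvection (w.injective.ne hxy) c := Subtype.ext <| by
  rw [coe_blockEmb, Matrix.SpecialLinearGroup.transvection_coe,
    Matrix.SpecialLinearGroup.transvection_coe, add_sub_cancel_left, padZero_single]

end BlockEmbedding

section LeviDecomposition

open Matrix
open scoped Pointwise

variable {α ι R : Type*}

/-- A set `W` is autonomous for a relation `r` if every point outside `W` is related in the same
way to all points of `W`. For a linear order these are the order-convex sets. -/
def IsAutonomous (r : ι → ι → Prop) (W : Set ι) : Prop :=
  ∀ k ∉ W, ∀ x ∈ W, ∀ y ∈ W, (r k x → r k y) ∧ (r x k → r y k)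

/-- The pairs lying on the diagonal or in the block `W × W`: the support of a block-embedded
matrix. -/
def blockRel (W : Set ι) (i j : ι) : Prop := i = j ∨ i ∈ W ∧ j ∈ W

/-- The pairs of `r` not inside the block `W × W`: for unitriangular matrices, these are the
positions of the unipotent radical complementing the block. -/
def radicalRel (r : ι → ι → Prop) (W : Set ι) (i j : ι) : Prop := r i j ∧ ¬ (i ∈ W ∧ j ∈ W)

theorem IsAutonomous.comp_blockRel_radicalRel {r : ι → ι → Prop} {W : Set ι}
    (hW : IsAutonomous r W) {i j : ι} (h : Relation.Comp (blockRel W) (radicalRel r W) i j) :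
    radicalRel r W i j := by
  obtain ⟨k, rfl | ⟨hi, hk⟩, hkj, hnot⟩ := h
  · exact ⟨hkj, hnot⟩
  · have hj : j ∉ W := fun hj => hnot ⟨hk, hj⟩
    exact ⟨(hW j hj k hk i hi).2 hkj, fun h => hj h.2⟩

theorem IsAutonomous.comp_radicalRel_blockRel {r : ι → ι → Prop} {W : Set ι}
    (hW : IsAutonomous r W) {i j : ι} (h : Relation.Comp (radicalRel r W) (blockRel W) i j) :
    radicalRel r W i j := by
  obtain ⟨k, ⟨hik, hnot⟩, rfl | ⟨hk, hj⟩⟩ := h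
  · exact ⟨hik, hnot⟩
  · have hi : i ∉ W := fun hi => hnot ⟨hi, hk⟩
    exact ⟨(hW i hi k hk j hj).1 hik, fun h => hi h.1⟩

variable [Fintype α] [DecidableEq α] [Fintype ι] [DecidableEq ι] [CommRing R]

theorem supportedOn_blockEmb (w : α ↪ ι) (g : Matrix.SpecialLinearGroup α R) :
    SupportedOn (blockEmb w g : Matrix ι ι R) (blockRel (Set.range w)) := by
  have hpad : SupportedOn (padZero w ((g : Matrix α α R) - 1)) (Relation.Map ⊤ w w) :=
    SupportedOn.padZero w fun x y h => absurd trivial h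
  refine (supportedOn_one.mono fun i j => Or.inl).add (hpad.mono ?_)
  rintro _ _ ⟨x, y, -, rfl, rfl⟩
  exact Or.inr ⟨⟨x, rfl⟩, y, rfl⟩

theorem blockEmb_conj_mem_patternSet_radicalRel {r : ι → ι → Prop} (w : α ↪ ι)
    (hW : IsAutonomous r (Set.range w)) (g : Matrix.SpecialLinearGroup α R)
    {v : Matrix.SpecialLinearGroup ι R} (hv : v ∈ patternSet (radicalRel r (Set.range w))) :
    blockEmb w g * v * (blockEmb w g)⁻¹ ∈ patternSet (radicalRel r (Set.range w)) := by
  have hleft := ((supportedOn_blockEmb w g).mul hv).mono fun _ _ => hW.comp_blockRel_radicalRel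
  have hconj := (hleft.mul (supportedOn_blockEmb w g⁻¹)).mono
    fun _ _ => hW.comp_radicalRel_blockRel
  rw [map_inv] at hconj
  change SupportedOn _ _
  rwa [coe_conj_sub_one]

theorem blockEmb_mem_patternSet {r : ι → ι → Prop} {r₀ : α → α → Prop} (w : α ↪ ι)
    (hr : ∀ x y, r₀ x y → r (w x) (w y)) {g : Matrix.SpecialLinearGroup α R}
    (hg : g ∈ patternSet r₀) : blockEmb w g ∈ patternSet r := by
  have hpad : SupportedOn (padZero w ((g : Matrix α α R) - 1)) r := by
    refine (SupportedOn.padZero w hg).mono ?_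
    rintro _ _ ⟨x, y, hxy, rfl, rfl⟩
    exact hr x y hxy
  change SupportedOn ((blockEmb w g : Matrix ι ι R) - 1) r
  rwa [coe_blockEmb, add_sub_cancel_left]

theorem blockEmb_mul_mem_patternSet {r : ι → ι → Prop} {r₀ : α → α → Prop} (w : α ↪ ι)
    (hW : IsAutonomous r (Set.range w)) (hr : ∀ x y, r₀ x y → r (w x) (w y))
    {g : Matrix.SpecialLinearGroup α R} (hg : g ∈ patternSet r₀) {v : Matrix.SpecialLinearGroup ι R}
    (hv : v ∈ patternSet (radicalRel r (Set.range w))) : blockEmb w g * v ∈ patternSet r := by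
  have hleft : SupportedOn ((blockEmb w g : Matrix ι ι R) * ((v : Matrix ι ι R) - 1)) r :=
    ((supportedOn_blockEmb w g).mul hv).mono fun _ _ h => (hW.comp_blockRel_radicalRel h).1
  have hsum := hleft.add (blockEmb_mem_patternSet w hr hg)
  change SupportedOn (((blockEmb w g * v : Matrix.SpecialLinearGroup ι R) : Matrix ι ι R) - 1) r
  rwa [mul_sub, mul_one, sub_add_sub_cancel, ← Matrix.SpecialLinearGroup.coe_mul] at hsum

theorem exists_eq_blockEmb_mul_of_mem_patternSet {r : ι → ι → Prop} {r₀ : α → α → Prop}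
    [IsStrictTotalOrder α r₀] (w : α ↪ ι) (hW : IsAutonomous r (Set.range w))
    (hr : ∀ x y, r (w x) (w y) ↔ r₀ x y) {g : Matrix.SpecialLinearGroup ι R}
    (hg : g ∈ patternSet r) :
    ∃ a ∈ patternSet r₀, ∃ v ∈ patternSet (radicalRel r (Set.range w)),
      g = blockEmb w a * v := by
  set M : Matrix α α R := ((g : Matrix ι ι R) - 1).submatrix w w with hM
  have hMr : SupportedOn M r₀ := fun x y h => hg _ _ (mt (hr x y).1 h)
  let a : Matrix.SpecialLinearGroup α R := ⟨1 + M, det_one_add_of_supportedOn hMr⟩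
  have haM : (a : Matrix α α R) - 1 = M := add_sub_cancel_left 1 M
  have ha : a ∈ patternSet r₀ := by
    change SupportedOn _ _
    rwa [haM]
  have hdiff : SupportedOn ((g : Matrix ι ι R) - (blockEmb w a : Matrix ι ι R))
      (radicalRel r (Set.range w)) := by
    intro i j hij
    rw [coe_blockEmb, haM, ← sub_sub, Matrix.sub_apply]
    by_cases hblock : i ∈ Set.range w ∧ j ∈ Set.range w
    · obtain ⟨⟨x, rfl⟩, y, rfl⟩ := hblock
      rw [padZero_apply_apply, hM, submatrix_apply, sub_self]
    · have hout : padZero w M i j = 0 := by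
        refine hMr.padZero w i j ?_
        rintro ⟨x, y, -, rfl, rfl⟩
        exact hblock ⟨⟨x, rfl⟩, y, rfl⟩
      rw [hout, hg i j fun h => hij ⟨h, hblock⟩, sub_zero]
  refine ⟨a, ha, (blockEmb w a)⁻¹ * g, ?_, by simp⟩
  have hv := ((supportedOn_blockEmb w a⁻¹).mul hdiff).mono fun _ _ => hW.comp_blockRel_radicalRel
  rw [mul_sub, ← Matrix.SpecialLinearGroup.coe_mul, ← Matrix.SpecialLinearGroup.coe_mul, map_inv,
    inv_mul_cancel, Matrix.SpecialLinearGroup.coe_one] at hv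
  exact hv

theorem patternSet_eq_image_blockEmb_mul {r : ι → ι → Prop} {r₀ : α → α → Prop}
    [IsStrictTotalOrder α r₀] (w : α ↪ ι) (hW : IsAutonomous r (Set.range w))
    (hr : ∀ x y, r (w x) (w y) ↔ r₀ x y) :
    (patternSet r : Set (Matrix.SpecialLinearGroup ι R)) =
      blockEmb w '' patternSet r₀ * patternSet (radicalRel r (Set.range w)) := by
  apply Set.Subset.antisymm
  · intro g hg
    obtain ⟨a, ha, v, hv, rfl⟩ := exists_eq_blockEmb_mul_of_mem_patternSet w hW hr hg
    exact Set.mul_mem_mul ⟨a, ha, rfl⟩ hv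
  · rintro _ ⟨_, ⟨a, ha, rfl⟩, v, hv, rfl⟩
    exact blockEmb_mul_mem_patternSet w hW (fun x y => (hr x y).2) ha hv

end LeviDecomposition

section ElementaryGenerators

open scoped commutatorElement

variable {R : Type*} [CommRing R]

open Matrix in
theorem commutatorElement_transvection {ι : Type*} [Fintype ι] [DecidableEq ι] {i j k : ι}
    (hik : i ≠ k) (hkj : k ≠ j) (hij : i ≠ j) (r s : R) :
    ⁅Matrix.SpecialLinearGroup.transvection hik r, Matrix.SpecialLinearGroup.transvection hkj s⁆ =
      Matrix.SpecialLinearGroup.transvection hij (r * s) := by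
  rw [commutatorElement_def, mul_inv_eq_iff_eq_mul, mul_inv_eq_iff_eq_mul]
  apply Subtype.ext
  simp only [Matrix.SpecialLinearGroup.coe_mul, Matrix.SpecialLinearGroup.transvection_coe,
    add_mul, mul_add, one_mul, mul_one, single_mul_single_same,
    single_mul_single_of_ne _ _ _ _ hij.symm, single_mul_single_of_ne _ _ _ _ hkj.symm,
    add_zero]
  abel

theorem transvection_mem_of_adjacent {n : ℕ} {T : Subgroup (Matrix.SpecialLinearGroup (Fin n) R)}
    (hT : ∀ (i j : Fin n) (hij : i ≠ j), i.val + 1 = j ∨ j.val + 1 = i →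
      ∀ c : R, Matrix.SpecialLinearGroup.transvection hij c ∈ T)
    (i j : Fin n) (hij : i ≠ j) (c : R) : Matrix.SpecialLinearGroup.transvection hij c ∈ T := by
  by_cases hadj : i.val + 1 = j ∨ j.val + 1 = i
  · exact hT i j hij hadj c
  obtain ⟨k, hk⟩ : ∃ k : Fin n, i < k ∧ k < j ∨ j < k ∧ k < i := by
    rcases hij.lt_or_gt with h | h
    · exact ⟨⟨i + 1, by omega⟩, by simp only [Fin.lt_def] at *; omega⟩
    · exact ⟨⟨j + 1, by omega⟩, by simp only [Fin.lt_def] at *; omega⟩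
  have hik : i ≠ k := by omega
  have hkj : k ≠ j := by omega
  have hx := transvection_mem_of_adjacent hT i k hik c
  have hy := transvection_mem_of_adjacent hT k j hkj 1
  rw [← mul_one c, ← commutatorElement_transvection hik hkj hij]
  exact mul_mem (mul_mem (mul_mem hx hy) (inv_mem hx)) (inv_mem hy)
termination_by ((i : ℤ) - j).natAbs
decreasing_by all_goals omega

end ElementaryGenerators

section Windows

variable {m n k : ℕ}

/-- The block of `m` consecutive indices of `Fin n` starting at `k`. -/
def window (hk : k + m ≤ n) : Fin m ↪ Fin n :=
  (Fin.natAddEmb k).trans (Fin.castLEEmb hk)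

theorem coe_window (hk : k + m ≤ n) (x : Fin m) : (window hk x : ℕ) = k + x :=
  rfl

theorem mem_range_window (hk : k + m ≤ n) {i : Fin n} :
    i ∈ Set.range (window hk) ↔ k ≤ i ∧ (i : ℕ) < k + m := by
  refine ⟨?_, fun hi => ⟨⟨i - k, by omega⟩, Fin.ext (Nat.add_sub_cancel' hi.1)⟩⟩
  rintro ⟨x, rfl⟩
  rw [coe_window]
  omega

theorem exists_window_of_adjacent (hm : 2 ≤ m) (hmn : m ≤ n) {i j : Fin n}
    (hij : i.val + 1 = j ∨ j.val + 1 = i) :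
    ∃ (k : ℕ) (hk : k + m ≤ n), i ∈ Set.range (window hk) ∧ j ∈ Set.range (window hk) := by
  refine ⟨min (min i j) (n - m), by omega, ?_⟩
  simp only [mem_range_window]
  omega

/-- The strict order of `Fin n` for even `t` and its reverse for odd `t`, so that a matrix is
unitriangular of the kind prescribed for the `t`-th factor of an alternating product when its
difference from `1` is supported on this relation. -/
def alternatingLT (n t : ℕ) : Fin n → Fin n → Prop :=
  if t % 2 = 0 then (· < ·) else (· > ·)

instance isStrictTotalOrder_alternatingLT (n t : ℕ) :
    IsStrictTotalOrder (Fin n) (alternatingLT n t) := by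
  unfold alternatingLT
  split_ifs <;> infer_instance

theorem alternatingLT_window (hk : k + m ≤ n) (t : ℕ) (x y : Fin m) :
    alternatingLT n t (window hk x) (window hk y) ↔ alternatingLT m t x y := by
  unfold alternatingLT
  split_ifs <;> simp only [Fin.lt_def, gt_iff_lt, coe_window, add_lt_add_iff_left]

theorem isAutonomous_alternatingLT_window (hk : k + m ≤ n) (t : ℕ) :
    IsAutonomous (alternatingLT n t) (Set.range (window hk)) := by
  intro i hi x hx y hy
  rw [mem_range_window] at hi hx hy
  unfold alternatingLT
  split_ifs <;> omega

end Windows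

section Elementary

open scoped Pointwise

variable {R : Type} [CommRing R] {m n N : ℕ}

theorem transvection_mem_elementarySubgroup (i j : Fin n) (hij : i ≠ j) (c : R) :
    Matrix.SpecialLinearGroup.transvection hij c ∈ ElementarySubgroup n R :=
  Subgroup.subset_closure ⟨i, j, c, hij, rfl⟩

theorem elementarySubgroup_le {T : Subgroup (Matrix.SpecialLinearGroup (Fin n) R)}
    (hT : ∀ (i j : Fin n) (hij : i ≠ j) (c : R),
      Matrix.SpecialLinearGroup.transvection hij c ∈ T) :
    ElementarySubgroup n R ≤ T := by
  refine (Subgroup.closure_le T).2 ?_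
  rintro g ⟨i, j, c, hij, hg⟩
  rw [show g = Matrix.SpecialLinearGroup.transvection hij c from Subtype.ext hg]
  exact hT i j hij c

theorem unitriangularUpper_eq_patternSet : UnitriangularUpper n R = patternSet (· < ·) :=
  Set.ext fun _ => mem_patternSet_iff.symm

theorem unitriangularLower_eq_patternSet : UnitriangularLower n R = patternSet (· > ·) :=
  Set.ext fun _ => mem_patternSet_iff.symm

theorem mem_patternSet_alternatingLT_iff {t : ℕ} {g : Matrix.SpecialLinearGroup (Fin n) R} :
    g ∈ patternSet (alternatingLT n t) ↔
      (t % 2 = 0 → g ∈ UnitriangularUpper n R) ∧ (t % 2 = 1 → g ∈ UnitriangularLower n R) := by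
  rw [unitriangularUpper_eq_patternSet, unitriangularLower_eq_patternSet, alternatingLT]
  rcases Nat.mod_two_eq_zero_or_one t with ht | ht <;> simp [ht]

theorem setOf_isAlternatingUnitriangularProd (n : ℕ) (R : Type) [CommRing R] (N : ℕ) :
    {g | IsAlternatingUnitriangularProd n R N g} =
      ((List.finRange N).map fun t : Fin N =>
        (patternSet (alternatingLT n t) : Set (Matrix.SpecialLinearGroup (Fin n) R))).prod := by
  ext g
  rw [← List.ofFn_eq_map, Set.mem_prod_list_ofFn]
  constructor
  · rintro ⟨u, hu, rfl⟩
    exact ⟨fun t => ⟨u t, mem_patternSet_alternatingLT_iff.2 (hu t)⟩, rfl⟩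
  · rintro ⟨u, rfl⟩
    exact ⟨fun t => u t, fun t => mem_patternSet_alternatingLT_iff.1 (u t).2, rfl⟩

theorem isAlternatingUnitriangularProd_one : IsAlternatingUnitriangularProd n R N 1 :=
  ⟨1, fun t => mem_patternSet_alternatingLT_iff.1 (one_mem_patternSet _),
    (List.prod_eq_one (by simp [List.mem_ofFn])).symm⟩

theorem IsAlternatingUnitriangularProd.mem_elementarySubgroup
    {g : Matrix.SpecialLinearGroup (Fin n) R} (hg : IsAlternatingUnitriangularProd n R N g) :
    g ∈ ElementarySubgroup n R := by
  obtain ⟨u, hu, rfl⟩ := hg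
  refine list_prod_mem fun x hx => ?_
  obtain ⟨t, rfl⟩ := List.mem_ofFn.1 hx
  exact patternSet_subset_of_transvection_mem transvection_mem_elementarySubgroup _
    (mem_patternSet_alternatingLT_iff.2 (hu t))

theorem blockEmb_window_smul_setOf_isAlternatingUnitriangularProd
    (h : ∀ g ∈ ElementarySubgroup m R, IsAlternatingUnitriangularProd m R N g) {k : ℕ}
    (hk : k + m ≤ n) {g : Matrix.SpecialLinearGroup (Fin m) R} (hg : g ∈ ElementarySubgroup m R) :
    blockEmb (window hk) g • {g | IsAlternatingUnitriangularProd n R N g} =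
      {g | IsAlternatingUnitriangularProd n R N g} := by
  have hE : {g | IsAlternatingUnitriangularProd m R N g} = (ElementarySubgroup m R : Set _) :=
    Set.Subset.antisymm (fun _ hg => hg.mem_elementarySubgroup) h
  rw [setOf_isAlternatingUnitriangularProd] at hE ⊢
  have hW (t : Fin N) := isAutonomous_alternatingLT_window hk t
  exact smul_list_prod_eq_of_levi (blockEmb (window hk)) (ElementarySubgroup m R)
    (fun t => patternSet_eq_image_blockEmb_mul (window hk) (hW t) (alternatingLT_window hk t))
    (fun t a _ hv => blockEmb_conj_mem_patternSet_radicalRel (window hk) (hW t) a hv) hE hg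

theorem statement4_general (R : Type) [CommRing R] {m n : ℕ} (hm : 2 ≤ m) (hmn : m ≤ n) (N : ℕ)
    (h : ∀ g ∈ ElementarySubgroup m R, IsAlternatingUnitriangularProd m R N g) :
    ∀ g ∈ ElementarySubgroup n R, IsAlternatingUnitriangularProd n R N g := by
  set Y := {g | IsAlternatingUnitriangularProd n R N g}
  have hstab : ElementarySubgroup n R ≤
      MulAction.stabilizer (Matrix.SpecialLinearGroup (Fin n) R) Y := by
    refine elementarySubgroup_le (transvection_mem_of_adjacent fun i j hij hadj c => ?_)
    obtain ⟨k, hk, ⟨x, rfl⟩, y, rfl⟩ := exists_window_of_adjacent hm hmn hadj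
    have hxy : x ≠ y := ne_of_apply_ne _ hij
    rw [MulAction.mem_stabilizer_iff, ← blockEmb_transvection (window hk) hxy]
    exact blockEmb_window_smul_setOf_isAlternatingUnitriangularProd h hk
      (transvection_mem_elementarySubgroup x y hxy c)
  intro g hg
  have hgY : g • (1 : Matrix.SpecialLinearGroup (Fin n) R) ∈ g • Y :=
    Set.smul_mem_smul_set isAlternatingUnitriangularProd_one
  rwa [MulAction.mem_stabilizer_iff.1 (hstab hg), smul_eq_mul, mul_one] at hgY

end Elementary

theorem statement4 (R : Type) [CommRing R] (n : ℕ) (hn : 3 ≤ n) (N : ℕ) (hN : 1 ≤ N)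
    (h2 : ∀ g ∈ ElementarySubgroup 3 R, IsAlternatingUnitriangularProd 3 R N g) :
    ∀ g ∈ ElementarySubgroup n R, IsAlternatingUnitriangularProd n R N g :=
  statement4_general R (by norm_num) hn N h2
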